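/- Let f ∈ ℚ[X₁,…,Xₙ], let e ≥ 0 be an integer, set d = e + ⌈deg(f)/2⌉, and let 𝒯 be any subset of the set of monomials of total degree ≤ e. Then the following are equivalent: (1) f ∉ RSOS(𝒯); (2) there exists a rational sequence ŷ ∈ ℚ^m with m = C(n+2d, 2d), indexed by multi-indices of degree ≤ 2d, whose associated linear form L_ŷ on polynomials of degree ≤ 2d satisfies: for every nonzero polynomial v with supp(v) ⊆ 𝒯 one has L_ŷ(f·v²) < 0, and for every polynomial u of degree ≤ d one has L_ŷ(u²) ≥ 0. -/

import Mathlib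

open MvPolynomial

/-- Exponent multi-indices in `n` variables of total degree at most `d`
(the exponents of the monomials of total degree `≤ d`). -/
abbrev Idx (n d : ℕ) : Type := {α : Fin n →₀ ℕ // α.degree ≤ d}

noncomputable instance (n d : ℕ) : Fintype (Idx n d) :=
  Set.Finite.fintype (s := {α : Fin n →₀ ℕ | α.degree ≤ d}) <| by
    apply Set.Finite.subset
      (Set.finite_Iic (Finsupp.equivFunOnFinite.symm fun _ : Fin n => d))
    intro α hα
    simp only [Set.mem_Iic, Finsupp.le_def]
    intro i
    exact le_trans (Finsupp.le_degree i α) hα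

/-- `f ∈ RSOS(𝒯)` : there are polynomials `u₁,…,u_l, v₁,…,v_{l'}` with
`supp(vⱼ) ⊆ 𝒯` for all `j` and `Σⱼ vⱼ² ≠ 0` such that `f · Σⱼ vⱼ² = Σᵢ uᵢ²`. -/
def RSOS (n : ℕ) (𝒯 : Finset (Fin n →₀ ℕ)) (f : MvPolynomial (Fin n) ℝ) : Prop :=
  ∃ (l l' : ℕ) (u : Fin l → MvPolynomial (Fin n) ℝ)
    (v : Fin l' → MvPolynomial (Fin n) ℝ),
    (∀ j, (v j).support ⊆ 𝒯) ∧ (∑ j, v j ^ 2) ≠ 0 ∧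
      f * (∑ j, v j ^ 2) = ∑ i, u i ^ 2

/-- `f/g ∈ RSOS(𝒯)` for a rational function `f/g` : there are polynomials
`u₁,…,u_l, v₁,…,v_{l'}` with `supp(vⱼ) ⊆ 𝒯` for all `j` and `Σⱼ vⱼ² ≠ 0`
such that `f · Σⱼ vⱼ² = g · Σᵢ uᵢ²`. -/
def RSOSfrac (n : ℕ) (𝒯 : Finset (Fin n →₀ ℕ)) (f g : MvPolynomial (Fin n) ℝ) : Prop :=
  ∃ (l l' : ℕ) (u : Fin l → MvPolynomial (Fin n) ℝ)
    (v : Fin l' → MvPolynomial (Fin n) ℝ),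
    (∀ j, (v j).support ⊆ 𝒯) ∧ (∑ j, v j ^ 2) ≠ 0 ∧
      f * (∑ j, v j ^ 2) = g * ∑ i, u i ^ 2

/-- The moment matrix of order `t` of a sequence `y`, with rows and columns
indexed by multi-indices of degree `≤ t` and `(α,β)` entry `y_{α+β}`. -/
noncomputable def momentMatrix (n t : ℕ) (y : (Fin n →₀ ℕ) → ℝ) :
    Matrix (Idx n t) (Idx n t) ℝ :=
  fun α β => y (α.1 + β.1)

/-- The localizing moment matrix `M_t(qy)` of order `t`, with `(α,β)` entry
`Σ_γ q_γ y_{γ+α+β}`. -/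
noncomputable def locMomentMatrix (n t : ℕ) (q : MvPolynomial (Fin n) ℝ)
    (y : (Fin n →₀ ℕ) → ℝ) : Matrix (Idx n t) (Idx n t) ℝ :=
  fun α β => ∑ γ ∈ q.support, q.coeff γ * y (γ + α.1 + β.1)

/-- The localizing moment matrix `M(qy)` with rows and columns indexed by the
exponents of the monomials in `𝒯`, with `(α,β)` entry `Σ_γ q_γ y_{γ+α+β}`. -/
noncomputable def locMomentMatrixOn (n : ℕ) (𝒯 : Finset (Fin n →₀ ℕ))
    (q : MvPolynomial (Fin n) ℝ) (y : (Fin n →₀ ℕ) → ℝ) : Matrix 𝒯 𝒯 ℝ :=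
  fun α β => ∑ γ ∈ q.support, q.coeff γ * y (γ + α.1 + β.1)

/-- The linear form `L_y(p) = Σ_α y_α p_α` associated to a sequence `y`. -/
noncomputable def LForm (n : ℕ) (y : (Fin n →₀ ℕ) → ℝ)
    (p : MvPolynomial (Fin n) ℝ) : ℝ :=
  ∑ α ∈ p.support, y α * p.coeff α

/-- `p` is a sum of squares of polynomials. -/
def IsSOS (n : ℕ) (p : MvPolynomial (Fin n) ℝ) : Prop :=
  ∃ (l : ℕ) (u : Fin l → MvPolynomial (Fin n) ℝ), p = ∑ i, u i ^ 2

/-!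
Certificates `f · ∑ vⱼ² = ∑ uᵢ²` are the vanishing sums of values of the quadratic map
`Q(u, v) = u² - f v²`, and comparing leading monomials bounds the degree of every `uᵢ` by `d`. So
`f ∉ RSOS(𝒯)` says that no nontrivial sum of values of `Q` vanishes on the finite-dimensional space
of pairs with `deg u ≤ d` and `supp v ⊆ 𝒯`. Positive weights are squares of reals, so `0` is then
not in the convex hull of `Q` of the unit sphere, which is compact by Carathéodory's theorem. Some
linear form is therefore positive on this compact set; positivity there is an open condition on the
coefficients, so they can be taken rational, and homogeneity of `Q` extends it to all nonzero pairs.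
Conversely, such a linear form is nonnegative on one side of a certificate and negative on the
other.
-/

section Convexity

theorem convexHull_eq_biUnion_image_stdSimplex {𝕜 E : Type*} [Field 𝕜] [LinearOrder 𝕜]
    [IsStrictOrderedRing 𝕜] [AddCommGroup E] [Module 𝕜 E] [FiniteDimensional 𝕜 E] (s : Set E) :
    convexHull 𝕜 s = ⋃ k ∈ Finset.range (Module.finrank 𝕜 E + 2),
      (fun p : (Fin k → 𝕜) × (Fin k → E) => ∑ i, p.1 i • p.2 i) ''
        (stdSimplex 𝕜 (Fin k) ×ˢ Set.univ.pi fun _ => s) := by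
  refine Set.Subset.antisymm (fun x hx => ?_) (Set.iUnion₂_subset fun k _ => ?_)
  · obtain ⟨ι, _, z, w, hz, hind, hw, hw1, rfl⟩ := eq_pos_convex_span_of_mem_convexHull hx
    have hcard : Fintype.card ι ≤ Module.finrank 𝕜 E + 1 :=
      hind.card_le_finrank_succ.trans (Nat.succ_le_succ (Submodule.finrank_le _))
    let g := (Fintype.equivFin ι).symm
    exact Set.mem_biUnion (Finset.mem_coe.2 (Finset.mem_range.2 (Nat.lt_succ_of_le hcard)))
      ⟨(w ∘ g, z ∘ g),
        ⟨⟨fun i => (hw (g i)).le, (g.sum_comp w).trans hw1⟩, fun i _ => hz ⟨g i, rfl⟩⟩,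
        g.sum_comp fun i => w i • z i⟩
  · rintro _ ⟨⟨w, z⟩, ⟨⟨hw, hw1⟩, hz⟩, rfl⟩
    exact mem_convexHull_of_exists_fintype w z hw hw1 (fun i => hz i trivial) rfl

theorem isCompact_convexHull {E : Type*} [AddCommGroup E] [Module ℝ E] [FiniteDimensional ℝ E]
    [TopologicalSpace E] [ContinuousAdd E] [ContinuousSMul ℝ E] {s : Set E} (hs : IsCompact s) :
    IsCompact (convexHull ℝ s) := by
  rw [convexHull_eq_biUnion_image_stdSimplex]
  exact (Finset.range _).isCompact_biUnion fun k _ =>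
    ((isCompact_stdSimplex ℝ (Fin k)).prod (isCompact_univ_pi fun _ => hs)).image (by fun_prop)

variable {ι : Type*} [Fintype ι] {S : Set (ι → ℝ)}

theorem isOpen_setOf_forall_dotProduct_pos (hS : IsCompact S) :
    IsOpen {y : ι → ℝ | ∀ z ∈ S, 0 < y ⬝ᵥ z} := by
  refine isOpen_iff_mem_nhds.2 fun y hy => hS.eventually_forall_of_forall_eventually fun z hz => ?_
  have hcont : Continuous fun p : (ι → ℝ) × (ι → ℝ) => p.1 ⬝ᵥ p.2 := by
    simp only [dotProduct]
    fun_prop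
  exact hcont.continuousAt.eventually (lt_mem_nhds (hy z hz))

theorem exists_dotProduct_pos_of_zero_notMem_convexHull (hS : IsCompact S)
    (h0 : (0 : ι → ℝ) ∉ convexHull ℝ S) : ∃ y : ι → ℝ, ∀ z ∈ S, 0 < y ⬝ᵥ z := by
  classical
  obtain ⟨L, c, hc, hL⟩ := geometric_hahn_banach_point_closed (convex_convexHull ℝ S)
    (isCompact_convexHull hS).isClosed h0
  rw [map_zero] at hc
  refine ⟨fun i => L (Pi.single i 1), fun z hz => ?_⟩
  have hLz : (fun i => L (Pi.single i 1)) ⬝ᵥ z = L z := by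
    conv_rhs => rw [pi_eq_sum_univ' z]
    simp [dotProduct, mul_comm]
  exact hLz ▸ hc.trans (hL z (subset_convexHull ℝ S hz))

theorem exists_rat_dotProduct_pos_of_zero_notMem_convexHull (hS : IsCompact S)
    (h0 : (0 : ι → ℝ) ∉ convexHull ℝ S) :
    ∃ y : ι → ℚ, ∀ z ∈ S, 0 < (fun i => (y i : ℝ)) ⬝ᵥ z :=
  (DenseRange.piMap fun _ : ι => Rat.denseRange_cast (𝕜 := ℝ)).exists_mem_open
    (isOpen_setOf_forall_dotProduct_pos hS) (exists_dotProduct_pos_of_zero_notMem_convexHull hS h0)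

end Convexity

section QuadraticMap

theorem continuous_quadraticMap {𝕜 V W : Type*} [NontriviallyNormedField 𝕜] [CompleteSpace 𝕜]
    [Invertible (2 : 𝕜)] [AddCommGroup V] [Module 𝕜 V] [FiniteDimensional 𝕜 V]
    [TopologicalSpace V] [IsTopologicalAddGroup V] [ContinuousSMul 𝕜 V] [T2Space V]
    [AddCommGroup W] [Module 𝕜 W] [TopologicalSpace W] [ContinuousAdd W] [ContinuousSMul 𝕜 W]
    (Q : QuadraticMap 𝕜 V W) : Continuous Q := by
  let b := Module.finBasis 𝕜 V
  have hQ (x : V) : Q x = ∑ i, ∑ j, (b.coord i x * b.coord j x) •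
      QuadraticMap.associated Q (b j) (b i) := by
    rw [← QuadraticMap.associated_eq_self_apply 𝕜 Q x]
    nth_rw 1 2 [← b.sum_repr x]
    simp only [map_sum, map_smul, LinearMap.sum_apply, LinearMap.smul_apply, Finset.smul_sum,
      mul_smul, b.coord_apply]
  have hb (i) : Continuous (b.coord i) := (b.coord i).continuous_of_finiteDimensional
  rw [funext hQ]
  fun_prop

variable {V W : Type*} [AddCommGroup V] [Module ℝ V] [AddCommGroup W] [Module ℝ W]

theorem zero_notMem_convexHull_image_quadraticMap {Q : QuadraticMap ℝ V W}
    (hQ : ∀ (m : ℕ) (p : Fin m → V), ∑ i, Q (p i) = 0 → p = 0) :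
    (0 : W) ∉ convexHull ℝ (Q '' {0}ᶜ) := by
  intro h0
  obtain ⟨ι, _, w, z, hw, hw1, hz, hsum⟩ := mem_convexHull_iff_exists_fintype.1 h0
  choose x hx hxz using hz
  let g := (Fintype.equivFin ι).symm
  have hsqrt : (fun j => √(w (g j)) • x (g j)) = 0 := by
    refine hQ _ _ ?_
    simp only [Q.map_smul, Real.mul_self_sqrt (hw _), hxz]
    exact (g.sum_comp fun i => w i • z i).trans hsum
  have hw0 (i : ι) : w i = 0 := by
    have hi := congrFun hsqrt (g.symm i)
    simpa [Real.sqrt_eq_zero (hw i), show x i ≠ 0 from hx i] using hi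
  simp [hw0] at hw1

theorem exists_rat_dotProduct_quadraticMap_pos [FiniteDimensional ℝ V] {ι : Type*} [Fintype ι]
    {Q : QuadraticMap ℝ V (ι → ℝ)}
    (hQ : ∀ (m : ℕ) (p : Fin m → V), ∑ i, Q (p i) = 0 → p = 0) :
    ∃ y : ι → ℚ, ∀ v ≠ 0, 0 < (fun i => (y i : ℝ)) ⬝ᵥ Q v := by
  let e := (Module.finBasis ℝ V).equivFun
  let S := Q.comp e.symm.toLinearMap '' Metric.sphere 0 1
  have hS : IsCompact S := (isCompact_sphere 0 1).image (continuous_quadraticMap _)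
  have hsub : S ⊆ Q '' {0}ᶜ := by
    rintro _ ⟨x, hx, rfl⟩
    exact ⟨e.symm x, by simpa using ne_zero_of_mem_unit_sphere ⟨x, hx⟩, rfl⟩
  obtain ⟨y, hy⟩ := exists_rat_dotProduct_pos_of_zero_notMem_convexHull hS
    fun h => zero_notMem_convexHull_image_quadraticMap hQ (convexHull_mono hsub h)
  refine ⟨y, fun v hv => ?_⟩
  have hnorm : ‖e v‖ ≠ 0 := by simpa using hv
  have hunit : Q (‖e v‖⁻¹ • v) ∈ S := ⟨‖e v‖⁻¹ • e v, by simp [norm_smul, hnorm], by simp⟩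
  have hpos := hy _ hunit
  rw [Q.map_smul, dotProduct_smul, smul_eq_mul] at hpos
  exact pos_of_mul_pos_right hpos (mul_self_nonneg _)

end QuadraticMap

section SumsOfSquares

open scoped MonomialOrder

variable {σ ι R : Type*} [CommRing R] [LinearOrder R] [IsStrictOrderedRing R] [Fintype ι]
  {u : ι → MvPolynomial σ R}

theorem exists_degree_le_and_coeff_sum_sq_pos (m : MonomialOrder σ) (hu : u ≠ 0) :
    ∃ α, (∀ j, m.degree (u j) ≼[m] α) ∧ 0 < (∑ j, u j ^ 2).coeff (α + α) := by
  classical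
  obtain ⟨i, hi⟩ := Function.ne_iff.1 hu
  obtain ⟨k, hk, hmax⟩ := (Finset.univ.filter fun j => u j ≠ 0).exists_max_image
    (fun j => m.toSyn (m.degree (u j))) ⟨i, by simpa using hi⟩
  have hle (j : ι) : m.degree (u j) ≼[m] m.degree (u k) := by
    rcases eq_or_ne (u j) 0 with hj | hj
    · simp [hj]
    · exact hmax j (by simpa using hj)
  have hcoeff : (∑ j, u j ^ 2).coeff (m.degree (u k) + m.degree (u k)) =
      ∑ j, (u j).coeff (m.degree (u k)) ^ 2 := by
    simp only [coeff_sum, sq, m.coeff_mul_of_add_of_degree_le (hle _) (hle _)]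
  refine ⟨_, hle, hcoeff ▸ Finset.sum_pos' (fun j _ => sq_nonneg _) ⟨k, Finset.mem_univ k, ?_⟩⟩
  exact sq_pos_of_ne_zero (m.coeff_degree_ne_zero_iff.2 (by simpa using hk))

theorem eq_zero_of_sum_sq_eq_zero (h : ∑ j, u j ^ 2 = 0) : u = 0 := by
  by_contra hu
  obtain ⟨_, _⟩ := exists_wellFoundedGT σ
  obtain ⟨α, -, hα⟩ := exists_degree_le_and_coeff_sum_sq_pos MonomialOrder.degLex hu
  simp [h] at hα

theorem two_mul_totalDegree_le_totalDegree_sum_sq (u : ι → MvPolynomial σ R) (i : ι) :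
    2 * (u i).totalDegree ≤ (∑ j, u j ^ 2).totalDegree := by
  rcases eq_or_ne u 0 with rfl | hu
  · simp
  obtain ⟨_, _⟩ := exists_wellFoundedGT σ
  obtain ⟨α, hle, hα⟩ := exists_degree_le_and_coeff_sum_sq_pos MonomialOrder.degLex hu
  have hi : (u i).totalDegree ≤ α.degree := by
    rw [← degree_degLexDegree]
    exact Finsupp.DegLex.monotone_degree (hle i)
  have hsum : (α + α).degree ≤ (∑ j, u j ^ 2).totalDegree :=
    le_totalDegree (mem_support_iff.2 hα.ne')
  rw [map_add] at hsum
  omega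

end SumsOfSquares

section Degree

variable {σ R : Type*} [CommSemiring R] {e : ℕ} {f p : MvPolynomial σ R}

theorem totalDegree_le_of_support_subset {T : Finset (σ →₀ ℕ)} (hT : ∀ α ∈ T, α.degree ≤ e)
    (hp : p.support ⊆ T) : p.totalDegree ≤ e :=
  Finset.sup_le fun α hα => hT α (hp hα)

theorem totalDegree_mul_sq_le (hp : p.totalDegree ≤ e) :
    (f * p ^ 2).totalDegree ≤ f.totalDegree + 2 * e :=
  (totalDegree_mul _ _).trans <|
    Nat.add_le_add_left ((totalDegree_pow p 2).trans (Nat.mul_le_mul_left 2 hp)) _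

/-- The coefficients of total degree at most `N`, as a vector indexed by `Idx n N`. -/
noncomputable def coeffVec (R : Type*) [CommSemiring R] (n N : ℕ) :
    MvPolynomial (Fin n) R →ₗ[R] (Idx n N → R) :=
  LinearMap.pi fun α => lcoeff R α.1

theorem eq_zero_of_coeffVec_eq_zero {n N : ℕ} {p : MvPolynomial (Fin n) R}
    (hp : p.totalDegree ≤ N) (h : coeffVec R n N p = 0) : p = 0 := by
  by_contra hne
  obtain ⟨α, hα⟩ := support_nonempty.2 hne
  exact mem_support_iff.1 hα (congrFun h ⟨α, (le_totalDegree hα).trans hp⟩)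

end Degree

section SqSubMulSq

variable {R A : Type*} [CommRing R] [CommRing A] [Algebra R A]

/-- The quadratic map `(u, v) ↦ u² - f v²` on pairs `u ∈ U`, `v ∈ V`. The certificates
`f · ∑ vⱼ² = ∑ uᵢ²` are the vanishing sums of its values. -/
def sqSubMulSq (U V : Submodule R A) (f : A) : QuadraticMap R (U × V) A :=
  QuadraticMap.sq.comp (U.subtype ∘ₗ LinearMap.fst R U V) -
    (LinearMap.mulLeft R f).compQuadraticMap
      (QuadraticMap.sq.comp (V.subtype ∘ₗ LinearMap.snd R U V))

@[simp]
theorem sqSubMulSq_apply (U V : Submodule R A) (f : A) (p : U × V) :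
    sqSubMulSq U V f p = (p.1 : A) ^ 2 - f * (p.2 : A) ^ 2 := by
  simp [sqSubMulSq, sq]

end SqSubMulSq

section RationalCertificate

variable {n d e N : ℕ} {T : Finset (Fin n →₀ ℕ)} {f p : MvPolynomial (Fin n) ℝ}

theorem eq_zero_of_sum_sqSubMulSq_eq_zero (hf : ¬ RSOS n T f)
    (U : Submodule ℝ (MvPolynomial (Fin n) ℝ)) (m : ℕ)
    (p : Fin m → U × restrictSupport ℝ (T : Set (Fin n →₀ ℕ)))
    (hp : ∑ i, sqSubMulSq U _ f (p i) = 0) : p = 0 := by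
  have hcert : f * ∑ i, ((p i).2 : MvPolynomial (Fin n) ℝ) ^ 2 =
      ∑ i, ((p i).1 : MvPolynomial (Fin n) ℝ) ^ 2 := by
    simp only [sqSubMulSq_apply, Finset.sum_sub_distrib, ← Finset.mul_sum] at hp
    exact (sub_eq_zero.1 hp).symm
  have hV : ∑ i, ((p i).2 : MvPolynomial (Fin n) ℝ) ^ 2 = 0 := by
    by_contra hne
    exact hf ⟨m, m, _, _, fun i => Finset.coe_subset.1 ((mem_restrictSupport_iff ℝ).1 (p i).2.2),
      hne, hcert⟩
  have hU : ∑ i, ((p i).1 : MvPolynomial (Fin n) ℝ) ^ 2 = 0 := by rw [← hcert, hV, mul_zero]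
  have hv := eq_zero_of_sum_sq_eq_zero hV
  have hu := eq_zero_of_sum_sq_eq_zero hU
  exact funext fun i => Prod.ext (Subtype.ext (congrFun hu i)) (Subtype.ext (congrFun hv i))

theorem lForm_eq_constr (y : (Fin n →₀ ℕ) → ℝ) :
    LForm n y = (basisMonomials (Fin n) ℝ).constr ℝ y := by
  ext p
  rw [Module.Basis.constr_apply]
  exact Finset.sum_congr rfl fun α _ => mul_comm _ _

theorem lForm_eq_dotProduct_coeffVec (y : (Fin n →₀ ℕ) → ℝ) (hp : p.totalDegree ≤ N) :
    LForm n y p = (fun α : Idx n N => y α) ⬝ᵥ coeffVec ℝ n N p := by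
  have hsub : p.support ⊆ Finset.univ.map (Function.Embedding.subtype fun α => α.degree ≤ N) :=
    fun α hα => Finset.mem_map.2 ⟨⟨α, (le_totalDegree hα).trans hp⟩, Finset.mem_univ _, rfl⟩
  calc LForm n y p = ∑ α ∈ Finset.univ.map _, y α * p.coeff α :=
        Finset.sum_subset hsub fun α _ hα => by rw [notMem_support_iff.1 hα, mul_zero]
    _ = (fun α : Idx n N => y α) ⬝ᵥ coeffVec ℝ n N p := Finset.sum_map _ _ _

theorem exists_rat_lForm_sqSubMulSq_pos (hf : ¬ RSOS n T f) (hT : ∀ α ∈ T, α.degree ≤ e)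
    (hd : f.totalDegree + 2 * e ≤ 2 * d) :
    ∃ y : (Fin n →₀ ℕ) → ℚ, ∀ p : restrictTotalDegree (Fin n) ℝ d ×
      restrictSupport ℝ (T : Set (Fin n →₀ ℕ)), p ≠ 0 →
        0 < LForm n (fun α => (y α : ℝ)) (sqSubMulSq _ _ f p) := by
  let Q := sqSubMulSq (restrictTotalDegree (Fin n) ℝ d)
    (restrictSupport ℝ (T : Set (Fin n →₀ ℕ))) f
  have : Module.Finite ℝ (restrictSupport ℝ (T : Set (Fin n →₀ ℕ))) :=
    .of_basis (basisRestrictSupport ℝ _)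
  have hdeg (p) : (Q p).totalDegree ≤ 2 * d := by
    have hu := (mem_restrictTotalDegree _ _ _).1 p.1.2
    have hv := totalDegree_le_of_support_subset hT
      (Finset.coe_subset.1 ((mem_restrictSupport_iff ℝ).1 p.2.2))
    rw [sqSubMulSq_apply]
    exact (totalDegree_sub _ _).trans <| max_le
      ((totalDegree_pow _ 2).trans (Nat.mul_le_mul_left 2 hu))
      ((totalDegree_mul_sq_le hv).trans hd)
  obtain ⟨q, hq⟩ := exists_rat_dotProduct_quadraticMap_pos
    (Q := (coeffVec ℝ n (2 * d)).compQuadraticMap Q) fun m p hp =>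
      eq_zero_of_sum_sqSubMulSq_eq_zero hf _ m p <| eq_zero_of_coeffVec_eq_zero
        (totalDegree_finsetSum_le fun i _ => hdeg (p i)) ((map_sum _ _ _).trans hp)
  refine ⟨Function.extend Subtype.val q 0, fun p hp => ?_⟩
  rw [lForm_eq_dotProduct_coeffVec _ (hdeg p)]
  simp only [Subtype.val_injective.extend_apply]
  exact hq p hp

theorem not_rsos_of_forall_lForm (hT : ∀ α ∈ T, α.degree ≤ e)
    (hd : f.totalDegree + 2 * e ≤ 2 * d) (y : (Fin n →₀ ℕ) → ℝ)
    (hneg : ∀ v : MvPolynomial (Fin n) ℝ, v ≠ 0 → v.support ⊆ T → LForm n y (f * v ^ 2) < 0)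
    (hnonneg : ∀ u : MvPolynomial (Fin n) ℝ, u.totalDegree ≤ d → 0 ≤ LForm n y (u ^ 2)) :
    ¬ RSOS n T f := by
  rintro ⟨l, l', u, v, hv, hne, hcert⟩
  have hdegu (i) : (u i).totalDegree ≤ d := by
    have hsum : (∑ i, u i ^ 2).totalDegree ≤ f.totalDegree + 2 * e := by
      rw [← hcert, Finset.mul_sum]
      exact totalDegree_finsetSum_le fun j _ =>
        totalDegree_mul_sq_le (totalDegree_le_of_support_subset hT (hv j))
    have hi := two_mul_totalDegree_le_totalDegree_sum_sq u i
    omega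
  have hsum : ∑ j, LForm n y (f * v j ^ 2) = ∑ i, LForm n y (u i ^ 2) := by
    rw [lForm_eq_constr, ← map_sum, ← map_sum, ← Finset.mul_sum, hcert]
  have hle (j) : LForm n y (f * v j ^ 2) ≤ 0 := by
    rcases eq_or_ne (v j) 0 with hj | hj
    · simp [hj, LForm]
    · exact (hneg _ hj (hv j)).le
  obtain ⟨k, hk, hvk⟩ := Finset.exists_ne_zero_of_sum_ne_zero hne
  have hlt : ∑ j, LForm n y (f * v j ^ 2) < 0 :=
    Finset.sum_neg' (fun j _ => hle j) ⟨k, hk, hneg _ (ne_zero_pow two_ne_zero hvk) (hv k)⟩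
  exact hlt.not_ge (hsum ▸ Finset.sum_nonneg fun i _ => hnonneg _ (hdegu i))

theorem statement4_general (n d e : ℕ) (f : MvPolynomial (Fin n) ℝ) (T : Finset (Fin n →₀ ℕ))
    (hT : ∀ α ∈ T, α.degree ≤ e) (hd : f.totalDegree + 2 * e ≤ 2 * d) :
    ¬ RSOS n T f ↔ ∃ y : (Fin n →₀ ℕ) → ℚ,
      (∀ v : MvPolynomial (Fin n) ℝ, v ≠ 0 → v.support ⊆ T →
        LForm n (fun α => (y α : ℝ)) (f * v ^ 2) < 0) ∧
      (∀ u : MvPolynomial (Fin n) ℝ, u.totalDegree ≤ d →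
        0 ≤ LForm n (fun α => (y α : ℝ)) (u ^ 2)) := by
  refine ⟨fun hf => ?_, fun ⟨y, hneg, hnonneg⟩ => not_rsos_of_forall_lForm hT hd _ hneg hnonneg⟩
  obtain ⟨y, hy⟩ := exists_rat_lForm_sqSubMulSq_pos hf hT hd
  refine ⟨y, fun v hv hvT => ?_, fun u hu => ?_⟩
  · have hpos := hy (0, ⟨v, (mem_restrictSupport_iff ℝ).2 (Finset.coe_subset.2 hvT)⟩)
      (by simpa using hv)
    simpa [lForm_eq_constr] using hpos
  · rcases eq_or_ne u 0 with rfl | hu0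
    · simp [LForm]
    have hpos := hy (⟨u, (mem_restrictTotalDegree _ _ _).2 hu⟩, 0) (by simpa using hu0)
    simpa using hpos.le

end RationalCertificate

/-- for `f ∈ ℚ[X]` and `d = e + ⌈deg f / 2⌉`, `f ∉ RSOS(𝒯)` iff
there is a rational sequence `ŷ` whose associated linear form `L_ŷ` satisfies
`L_ŷ(f·v²) < 0` for every nonzero `v` with `supp(v) ⊆ 𝒯`, and `L_ŷ(u²) ≥ 0` for
every polynomial `u` of total degree `≤ d`. -/
theorem statement4 (n e : ℕ) (f : MvPolynomial (Fin n) ℚ)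
    (𝒯 : Finset (Fin n →₀ ℕ)) (h𝒯 : ∀ α ∈ 𝒯, α.degree ≤ e) :
    ¬ RSOS n 𝒯 (f.map (algebraMap ℚ ℝ)) ↔
      ∃ yhat : (Fin n →₀ ℕ) → ℚ,
        (∀ v : MvPolynomial (Fin n) ℝ, v ≠ 0 → v.support ⊆ 𝒯 →
          LForm n (fun α => (yhat α : ℝ)) ((f.map (algebraMap ℚ ℝ)) * v ^ 2) < 0) ∧
        (∀ u : MvPolynomial (Fin n) ℝ, u.totalDegree ≤ e + (f.totalDegree + 1) / 2 →
          0 ≤ LForm n (fun α => (yhat α : ℝ)) (u ^ 2)) := by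
  have hdeg : (f.map (algebraMap ℚ ℝ)).totalDegree ≤ f.totalDegree :=
    Finset.sup_mono (support_map_subset _ _)
  exact statement4_general n _ e _ 𝒯 h𝒯 (by omega)
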